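/- arXiv:1404.3854 — 2 statements merged into one kernel-verified Lean document; each statement's English description precedes it below -/
import Mathlib

section
/- Fix F ∈ ℍ_V, so V_ℂ = F ⊕ F̄. Then: (i) every F' ∈ ℍ_V intersects F̄ trivially, and hence is the graph of a unique ℂ-linear map φ : F → F̄ with respect to the decomposition V_ℂ = F ⊕ F̄; (ii) for a ℂ-linear map φ : F → F̄, the graph {z + φ(z) : z ∈ F} is totally isotropic for a_ℂ if and only if the bilinear map Φ : F × F → ℂ, Φ(v,v') = a_ℂ(v, φ(v')), is symmetric. -/
open TensorProduct Module

noncomputable section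

instance : RingHomSurjective (starRingEnd ℂ) :=
  ⟨fun z => ⟨(starRingEnd ℂ) z, by simp⟩⟩

variable {V : Type*} [AddCommGroup V] [Module ℝ V]

/-- The conjugation of `V_ℂ = ℂ ⊗[ℝ] V` induced by complex conjugation on `ℂ`. -/
def conjC (V : Type*) [AddCommGroup V] [Module ℝ V] :
    (ℂ ⊗[ℝ] V) →ₛₗ[starRingEnd ℂ] (ℂ ⊗[ℝ] V) where
  toFun := TensorProduct.map Complex.conjAe.toLinearMap LinearMap.id
  map_add' x y := map_add _ x y
  map_smul' c x := by
    induction x using TensorProduct.induction_on with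
    | zero => simp
    | tmul z v =>
        simp [TensorProduct.smul_tmul', smul_eq_mul, map_mul]
    | add x y hx hy => simp_all [smul_add]

/-- The hermitian form `h(v,w) = √-1 ⬝ a_ℂ(v, conj w)` associated to a real
symplectic form `a`. -/
def hermSymp (a : LinearMap.BilinForm ℝ V) (v w : ℂ ⊗[ℝ] V) : ℂ :=
  Complex.I * (LinearMap.BilinForm.baseChange ℂ a) v (conjC V w)

/-- Membership in `ℍ_V`: a `g`-dimensional complex subspace of `V_ℂ` that is totally
isotropic for `a_ℂ` and on which `h` is positive definite. -/
def InHV (a : LinearMap.BilinForm ℝ V) (g : ℕ) (F : Submodule ℂ (ℂ ⊗[ℝ] V)) : Prop :=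
  Module.finrank ℂ F = g ∧
  (∀ v ∈ F, ∀ w ∈ F, (LinearMap.BilinForm.baseChange ℂ a) v w = 0) ∧
  (∀ v ∈ F, v ≠ 0 → ∃ r : ℝ, 0 < r ∧ hermSymp a v v = r)

/-!
Moving the conjugation across the skew form `a_ℂ` gives `h(v̄, w̄) = -h(w, v)`, so `h` is negative
definite on `F̄` as soon as it is positive definite on `F`. A positive definite `F'` therefore meets
`F̄` only in `0`, and counting dimensions makes it a complement of `F̄`. The complements of `F̄` are
exactly the graphs of linear maps `F → F̄`. Since `F` and `F̄` are both isotropic, only the two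
mixed terms survive in `a_ℂ(z + φ z, z' + φ z')`, and skewness turns their sum into
`Φ(z, z') - Φ(z', z)`.
-/

section LinearAlgebra

variable {R M : Type*} [CommRing R] [AddCommGroup M] [Module R M]

theorem existsUnique_linearMap_forall_mem_iff_of_isCompl {S E : Type*} [Ring S] [AddCommGroup E]
    [Module S E] {p q r : Submodule S E} (hp : IsCompl p q) (hr : IsCompl r q) :
    ∃! φ : p →ₗ[S] q, ∀ w : E, w ∈ r ↔ ∃ z : p, w = (z : E) + (φ z : E) := by
  have add_mem_iff (z : p) (y : q) :
      (z : E) + y ∈ r ↔ y = -q.projectionOnto r hr.symm z := by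
    rw [← Submodule.projectionOnto_apply_eq_zero_iff hr.symm, map_add,
      Submodule.projectionOnto_apply_left, ← eq_neg_iff_add_eq_zero, eq_comm, neg_eq_iff_eq_neg]
  refine ⟨-(q.projectionOnto r hr.symm ∘ₗ p.subtype), fun w => ⟨fun hw => ?_, ?_⟩, fun ψ hψ => ?_⟩
  · obtain ⟨⟨z, y⟩, rfl, -⟩ := Submodule.existsUnique_add_of_isCompl_prod hp w
    exact ⟨z, by rw [(add_mem_iff z y).1 hw]; rfl⟩
  · rintro ⟨z, rfl⟩
    exact (add_mem_iff z _).2 rfl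
  · ext1 z
    exact (add_mem_iff z (ψ z)).1 ((hψ _).2 ⟨z, rfl⟩)

/-- A submodule on which a bilinear form vanishes identically. -/
def IsTotallyIsotropic (B : LinearMap.BilinForm R M) (p : Submodule R M) : Prop :=
  ∀ v ∈ p, ∀ w ∈ p, B v w = 0

theorem IsTotallyIsotropic.forall_graph_eq_zero_iff {B : LinearMap.BilinForm R M}
    {p q : Submodule R M} (hp : IsTotallyIsotropic B p) (hq : IsTotallyIsotropic B q)
    (hB : B.IsAlt) (φ : p → q) :
    (∀ z z' : p, B ((z : M) + (φ z : M)) ((z' : M) + (φ z' : M)) = 0) ↔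
      ∀ z z' : p, B (z : M) (φ z' : M) = B (z' : M) (φ z : M) := by
  have expand (z z' : p) : B ((z : M) + (φ z : M)) ((z' : M) + (φ z' : M)) =
      B (z : M) (φ z' : M) - B (z' : M) (φ z : M) := by
    rw [LinearMap.BilinForm.add_left, LinearMap.BilinForm.add_right,
      LinearMap.BilinForm.add_right, hp z z.2 z' z'.2, hq (φ z) (φ z).2 (φ z') (φ z').2,
      ← hB.neg_eq (z' : M) (φ z : M)]
    abel
  simp only [expand, sub_eq_zero]

theorem isAlt_baseChange (A : Type*) [CommRing A] [Algebra R A] {B : LinearMap.BilinForm R M}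
    (hB : B.IsAlt) : (B.baseChange A).IsAlt := by
  have skew : B.baseChange A = -(B.baseChange A).flip := by
    ext v w
    simp [← hB.neg_eq w v]
  intro x
  induction x using TensorProduct.induction_on with
  | zero => simp
  | tmul z v => simp [hB v]
  | add x y hx hy =>
    have hxy : B.baseChange A x y = -B.baseChange A y x := LinearMap.congr_fun₂ skew x y
    simp [hx, hy, hxy]

theorem finrank_eq_of_semilinearEquiv {K L E F : Type*} [Semiring K] [Semiring L]
    [AddCommMonoid E] [AddCommMonoid F] [Module K E] [Module L F] {σ : K →+* L} {σ' : L →+* K}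
    [RingHomInvPair σ σ'] [RingHomInvPair σ' σ] (e : E ≃ₛₗ[σ] F) :
    finrank K E = finrank L F := by
  have lift_rank_eq := lift_rank_eq_of_equiv_equiv σ e.toAddEquiv
    (RingHomInvPair.toRingEquiv σ σ').bijective e.map_smulₛₗ
  simpa only [finrank, Cardinal.toNat_lift] using congrArg Cardinal.toNat lift_rank_eq

end LinearAlgebra

section Conjugation

theorem conjC_tmul (z : ℂ) (v : V) : conjC V (z ⊗ₜ v) = starRingEnd ℂ z ⊗ₜ v :=
  rfl

theorem conjC_involutive : Function.Involutive (conjC V) := fun x => by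
  induction x using TensorProduct.induction_on with
  | zero => simp only [map_zero]
  | tmul z v => rw [conjC_tmul, conjC_tmul, Complex.conj_conj]
  | add x y hx hy => rw [map_add, map_add, hx, hy]

theorem finrank_map_conjC (F : Submodule ℂ (ℂ ⊗[ℝ] V)) :
    finrank ℂ (F.map (conjC V)) = finrank ℂ F :=
  (finrank_eq_of_semilinearEquiv
    ((LinearEquiv.ofInvolutive (conjC V) conjC_involutive).submoduleMap F)).symm

theorem baseChange_conjC_conjC (a : LinearMap.BilinForm ℝ V) (x y : ℂ ⊗[ℝ] V) :
    a.baseChange ℂ (conjC V x) (conjC V y) = starRingEnd ℂ (a.baseChange ℂ x y) := by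
  induction x using TensorProduct.induction_on with
  | zero => simp only [map_zero, LinearMap.zero_apply]
  | add x x' hx hx' => simp only [map_add, LinearMap.add_apply, hx, hx']
  | tmul z v =>
    induction y using TensorProduct.induction_on with
    | zero => simp only [map_zero]
    | add y y' hy hy' => simp only [map_add, hy, hy']
    | tmul w u => simp [conjC_tmul]

theorem IsTotallyIsotropic.map_conjC {a : LinearMap.BilinForm ℝ V} {F : Submodule ℂ (ℂ ⊗[ℝ] V)}
    (hF : IsTotallyIsotropic (a.baseChange ℂ) F) :
    IsTotallyIsotropic (a.baseChange ℂ) (F.map (conjC V)) := by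
  rintro _ ⟨v, hv, rfl⟩ _ ⟨w, hw, rfl⟩
  rw [baseChange_conjC_conjC, hF v hv w hw, map_zero]

end Conjugation

section HermitianForm

variable {a : LinearMap.BilinForm ℝ V} {F F' : Submodule ℂ (ℂ ⊗[ℝ] V)}

theorem hermSymp_conjC_conjC (ha : a.IsAlt) (v w : ℂ ⊗[ℝ] V) :
    hermSymp a (conjC V v) (conjC V w) = -hermSymp a w v := by
  rw [hermSymp, hermSymp, conjC_involutive, ← (isAlt_baseChange ℂ ha).neg_eq, mul_neg]

/-- Positive definiteness of `h` on `F`. As in `InHV`, it includes that `h v v` is real. -/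
def HermPosDefOn (a : LinearMap.BilinForm ℝ V) (F : Submodule ℂ (ℂ ⊗[ℝ] V)) : Prop :=
  ∀ v ∈ F, v ≠ 0 → ∃ r : ℝ, 0 < r ∧ hermSymp a v v = r

theorem HermPosDefOn.disjoint_map_conjC (hF' : HermPosDefOn a F') (hF : HermPosDefOn a F)
    (ha : a.IsAlt) : Disjoint F' (F.map (conjC V)) := by
  rw [Submodule.disjoint_def]
  rintro _ hw ⟨v, hv, rfl⟩
  by_contra hne
  have hv0 : v ≠ 0 := fun h => hne (by rw [h, map_zero])
  obtain ⟨r, hr, hvr⟩ := hF v hv hv0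
  obtain ⟨s, hs, hws⟩ := hF' _ hw hne
  have hsr : s = -r := by
    exact_mod_cast hws.symm.trans ((hermSymp_conjC_conjC ha v v).trans (congrArg Neg.neg hvr))
  linarith

theorem HermPosDefOn.isCompl_map_conjC [FiniteDimensional ℝ V] (hF' : HermPosDefOn a F')
    (hF : HermPosDefOn a F) (ha : a.IsAlt)
    (hrank : finrank ℝ V ≤ finrank ℂ F' + finrank ℂ F) : IsCompl F' (F.map (conjC V)) := by
  refine (Submodule.isCompl_iff_disjoint _ _ ?_).2 (hF'.disjoint_map_conjC hF ha)
  rwa [finrank_baseChange, finrank_map_conjC]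

end HermitianForm

theorem graphs_over_F_and_isotropy_general [FiniteDimensional ℝ V] {g : ℕ}
    (hdim : finrank ℝ V = 2 * g) {a : LinearMap.BilinForm ℝ V} (ha : a.IsAlt)
    {F : Submodule ℂ (ℂ ⊗[ℝ] V)} :
    (finrank ℂ F = g → HermPosDefOn a F →
      ∀ F' : Submodule ℂ (ℂ ⊗[ℝ] V), finrank ℂ F' = g → HermPosDefOn a F' →
        F' ⊓ F.map (conjC V) = ⊥ ∧
        ∃! φ : F →ₗ[ℂ] F.map (conjC V), ∀ w : ℂ ⊗[ℝ] V,
          w ∈ F' ↔ ∃ z : F, w = (z : ℂ ⊗[ℝ] V) + (φ z : ℂ ⊗[ℝ] V)) ∧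
    (IsTotallyIsotropic (a.baseChange ℂ) F → ∀ φ : F →ₗ[ℂ] F.map (conjC V),
      (∀ z z' : F, a.baseChange ℂ ((z : ℂ ⊗[ℝ] V) + (φ z : ℂ ⊗[ℝ] V))
        ((z' : ℂ ⊗[ℝ] V) + (φ z' : ℂ ⊗[ℝ] V)) = 0) ↔
      ∀ v v' : F, a.baseChange ℂ (v : ℂ ⊗[ℝ] V) (φ v' : ℂ ⊗[ℝ] V) =
        a.baseChange ℂ (v' : ℂ ⊗[ℝ] V) (φ v : ℂ ⊗[ℝ] V)) := by
  refine ⟨fun hFg hF F' hF'g hF' => ?_, fun hF φ =>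
    hF.forall_graph_eq_zero_iff hF.map_conjC (isAlt_baseChange ℂ ha) φ⟩
  have hFcompl : IsCompl F (F.map (conjC V)) := hF.isCompl_map_conjC hF ha (by omega)
  have hF'compl : IsCompl F' (F.map (conjC V)) := hF'.isCompl_map_conjC hF ha (by omega)
  exact ⟨hF'compl.inf_eq_bot,
    existsUnique_linearMap_forall_mem_iff_of_isCompl hFcompl hF'compl⟩

/-- fix `F ∈ ℍ_V` (so `V_ℂ = F ⊕ F̄`).  (i) Every `F' ∈ ℍ_V` intersects `F̄`
trivially and is the graph of a unique `ℂ`-linear map `φ : F → F̄`; (ii) the graph of a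
`ℂ`-linear `φ : F → F̄` is totally isotropic for `a_ℂ` iff the bilinear map
`Φ(v,v') = a_ℂ(v, φ(v'))` is symmetric. -/
theorem graphs_over_F_and_isotropy
    [FiniteDimensional ℝ V] (g : ℕ) (hg : 1 ≤ g)
    (hdim : Module.finrank ℝ V = 2 * g)
    (a : LinearMap.BilinForm ℝ V)
    (halt : LinearMap.IsAlt a) (hnd : LinearMap.BilinForm.Nondegenerate a)
    (F : Submodule ℂ (ℂ ⊗[ℝ] V)) (hF : InHV a g F) :
    (∀ F' : Submodule ℂ (ℂ ⊗[ℝ] V), InHV a g F' →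
      F' ⊓ Submodule.map (conjC V) F = ⊥ ∧
      ∃! φ : F →ₗ[ℂ] (Submodule.map (conjC V) F),
        ∀ w : ℂ ⊗[ℝ] V, w ∈ F' ↔
          ∃ z : F, w = (z : ℂ ⊗[ℝ] V) + (↑(φ z) : ℂ ⊗[ℝ] V)) ∧
    (∀ φ : F →ₗ[ℂ] (Submodule.map (conjC V) F),
      (∀ z z' : F,
        (LinearMap.BilinForm.baseChange ℂ a)
          ((z : ℂ ⊗[ℝ] V) + (↑(φ z) : ℂ ⊗[ℝ] V))
          ((z' : ℂ ⊗[ℝ] V) + (↑(φ z') : ℂ ⊗[ℝ] V)) = 0) ↔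
      (∀ v v' : F,
        (LinearMap.BilinForm.baseChange ℂ a) (v : ℂ ⊗[ℝ] V) (↑(φ v') : ℂ ⊗[ℝ] V) =
        (LinearMap.BilinForm.baseChange ℂ a) (v' : ℂ ⊗[ℝ] V) (↑(φ v) : ℂ ⊗[ℝ] V))) := by
  obtain ⟨hgraph, hisotropic⟩ := graphs_over_F_and_isotropy_general hdim halt (F := F)
  exact ⟨fun F' hF' => hgraph hF.1 hF.2.2 F' hF'.1 hF'.2.2, hisotropic hF.2.1⟩

end
end

section
/- Let I ⊂ V be a 1-dimensional subspace with s|I×I = 0. Then for every v ∈ V⁺ there exists x ∈ I with s_ℂ(x⊗1, v) ≠ 0; equivalently, V⁺ is disjoint from the complexification I^⊥_ℂ of I^⊥ = {w ∈ V : s(w,I) = 0}. -/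
open TensorProduct Module

noncomputable section

variable {V : Type*} [AddCommGroup V] [Module ℝ V]

/-- The hermitian form `h(v,w) = s_ℂ(v, conj w)` associated to a real symmetric
bilinear form `s`. -/
def hermOrth (s : LinearMap.BilinForm ℝ V) (v w : ℂ ⊗[ℝ] V) : ℂ :=
  (LinearMap.BilinForm.baseChange ℂ s) v (conjC V w)

/-- The set `V⁺ = {v ∈ V_ℂ : s_ℂ(v,v) = 0, h(v,v) > 0}`. -/
def Vplus (s : LinearMap.BilinForm ℝ V) : Set (ℂ ⊗[ℝ] V) :=
  {v | (LinearMap.BilinForm.baseChange ℂ s) v v = 0 ∧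
    ∃ r : ℝ, 0 < r ∧ hermOrth s v v = r}

/-- A real symmetric bilinear form `s` has signature `(p,q)` on the subspace `V₀`: `V₀`
is an `s`-orthogonal direct sum of a `p`-dimensional subspace on which `s` is positive
definite and a `q`-dimensional subspace on which `s` is negative definite. -/
def RealSig {U : Type*} [AddCommGroup U] [Module ℝ U]
    (s : LinearMap.BilinForm ℝ U) (U₀ : Submodule ℝ U) (p q : ℕ) : Prop :=
  ∃ P N : Submodule ℝ U, P ≤ U₀ ∧ N ≤ U₀ ∧ P ⊓ N = ⊥ ∧ P ⊔ N = U₀ ∧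
    Module.finrank ℝ P = p ∧ Module.finrank ℝ N = q ∧
    (∀ v ∈ P, ∀ w ∈ N, s v w = 0) ∧
    (∀ v ∈ P, v ≠ 0 → 0 < s v v) ∧
    (∀ w ∈ N, w ≠ 0 → s w w < 0)

/-! Write `v = a + i b` with `a, b ∈ V`. The conditions defining `V⁺` say that `a` and `b` span a
positive definite plane `W`, with `a ⊥ b` and `s(a,a) = s(b,b)`. A negative definite subspace `N` of
codimension `2` meets `W` trivially, so it is a complement of `W`, and then `s` is negative definite
on `W^⊥`. A vector `x` with `s_ℂ(x⊗1, v) = 0` lies in `W^⊥`, so it is not a nonzero isotropic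
vector. -/

theorem codisjoint_of_disjoint_of_finrank_quotient_le {K E : Type*} [DivisionRing K]
    [AddCommGroup E] [Module K E] {W N : Submodule K E} [FiniteDimensional K (E ⧸ N)]
    (hWN : Disjoint W N) (hdim : finrank K (E ⧸ N) ≤ finrank K W) : Codisjoint W N := by
  have hinj : Function.Injective (N.mkQ.domRestrict W) := by
    rwa [LinearMap.injective_domRestrict_iff, N.ker_mkQ]
  have : FiniteDimensional K W := Module.Finite.of_injective _ hinj
  have hsurj : Function.Surjective (N.mkQ.domRestrict W) :=
    (LinearMap.injective_iff_surjective_of_finrank_eq_finrank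
      ((LinearMap.finrank_le_finrank_of_injective hinj).antisymm hdim)).1 hinj
  rwa [LinearMap.surjective_domRestrict_iff N.mkQ_surjective, N.ker_mkQ] at hsurj

theorem disjoint_of_posDef_of_negDef {R M : Type*} [CommSemiring R] [Preorder R]
    [AddCommMonoid M] [Module R M] {B : LinearMap.BilinForm R M} {W N : Submodule R M}
    (hpos : ∀ w ∈ W, w ≠ 0 → 0 < B w w) (hneg : ∀ w ∈ N, w ≠ 0 → B w w < 0) :
    Disjoint W N := by
  rw [Submodule.disjoint_def]
  intro w hW hN
  by_contra hw
  exact (hpos w hW hw).not_gt (hneg w hN hw)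

theorem apply_self_neg_of_mem_orthogonal_posDef {K E : Type*} [Field K] [LinearOrder K]
    [IsStrictOrderedRing K] [AddCommGroup E] [Module K E] {B : LinearMap.BilinForm K E}
    (hB : B.IsRefl) {W N : Submodule K E} [FiniteDimensional K (E ⧸ N)]
    (hdim : finrank K (E ⧸ N) ≤ finrank K W)
    (hpos : ∀ w ∈ W, w ≠ 0 → 0 < B w w) (hneg : ∀ w ∈ N, w ≠ 0 → B w w < 0)
    {x : E} (hx : x ∈ B.orthogonal W) (hx0 : x ≠ 0) : B x x < 0 := by
  have hcodisj : Codisjoint W N :=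
    codisjoint_of_disjoint_of_finrank_quotient_le (disjoint_of_posDef_of_negDef hpos hneg) hdim
  obtain ⟨w, m, hw, hm, rfl⟩ := Submodule.codisjoint_iff_exists_add_eq.1 hcodisj x
  have hwm : B w w + B w m = 0 := by
    simpa only [map_add] using hx w hw
  have hmw : B w w + B m w = 0 := by
    simpa only [map_add, LinearMap.add_apply] using hB _ _ (hx w hw)
  have hsub : B (w + m) (w + m) = B m m - B w w := by
    simp only [map_add, LinearMap.add_apply]
    linear_combination hwm + hmw
  rw [hsub]
  rcases eq_or_ne w 0 with rfl | hw0
  · simpa using hneg m hm (by simpa using hx0)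
  rcases eq_or_ne m 0 with rfl | hm0
  · simpa using hpos w hw hw0
  · linarith [hpos w hw hw0, hneg m hm hm0]

theorem posDef_span_of_iIsOrtho {R M ι : Type*} [CommRing R] [LinearOrder R]
    [IsStrictOrderedRing R] [AddCommGroup M] [Module R M] {B : LinearMap.BilinForm R M}
    [Finite ι] {v : ι → M} (hv : B.iIsOrtho v) (hpos : ∀ i, 0 < B (v i) (v i)) :
    ∀ w ∈ Submodule.span R (Set.range v), w ≠ 0 → 0 < B w w := by
  have := Fintype.ofFinite ι
  intro w hw hw0
  obtain ⟨c, rfl⟩ := (Submodule.mem_span_range_iff_exists_fun R).1 hw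
  have hsum : B (∑ i, c i • v i) (∑ i, c i • v i) = ∑ i, c i ^ 2 * B (v i) (v i) := by
    simp only [map_sum, LinearMap.sum_apply, map_smul, LinearMap.smul_apply, smul_eq_mul]
    refine Finset.sum_congr rfl fun i _ ↦ ?_
    rw [Finset.sum_eq_single i (fun j _ hij ↦ by rw [hv hij]; simp) (by simp)]
    ring
  obtain ⟨i, hi⟩ : ∃ i, c i ≠ 0 := by
    by_contra! hc
    exact hw0 (by simp [hc])
  rw [hsum]
  exact Finset.sum_pos' (fun j _ ↦ mul_nonneg (sq_nonneg _) (hpos j).le)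
    ⟨i, Finset.mem_univ i, mul_pos (sq_pos_of_ne_zero hi) (hpos i)⟩

theorem baseChange_orthogonal_le {R A M : Type*} [CommSemiring R] [CommSemiring A] [Algebra R A]
    [AddCommMonoid M] [Module R M] (B : LinearMap.BilinForm R M) (N : Submodule R M) :
    (B.orthogonal N).baseChange A ≤ (B.baseChange A).orthogonal (N.baseChange A) := by
  rw [Submodule.baseChange_eq_span, Submodule.span_le]
  rintro _ ⟨m, hm, rfl⟩
  have hle : N.baseChange A ≤ LinearMap.ker ((B.baseChange A).flip ((1 : A) ⊗ₜ[R] m)) := by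
    rw [Submodule.baseChange_eq_span, Submodule.span_le]
    rintro _ ⟨n, hn, rfl⟩
    have hnm : B n m = 0 := hm n hn
    simp [hnm]
  exact fun n hn ↦ hle hn

theorem exists_eq_one_tmul_add_I_tmul (v : ℂ ⊗[ℝ] V) :
    ∃ a b : V, v = (1 : ℂ) ⊗ₜ[ℝ] a + Complex.I ⊗ₜ[ℝ] b := by
  obtain ⟨c, rfl⟩ := TensorProduct.eq_repr_basis_left Complex.basisOneI v
  exact ⟨c 0, c 1, by simp [Finsupp.sum_fintype]⟩

theorem RealSig.exists_negDef_finrank_quotient_eq {s : LinearMap.BilinForm ℝ V} {p q : ℕ}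
    (hsig : RealSig s ⊤ p q) :
    ∃ N : Submodule ℝ V, finrank ℝ (V ⧸ N) = p ∧ ∀ w ∈ N, w ≠ 0 → s w w < 0 := by
  obtain ⟨P, N, -, -, hinf, hsup, hP, -, -, -, hneg⟩ := hsig
  have hcompl : IsCompl N P := (IsCompl.of_eq hinf hsup).symm
  exact ⟨N, (N.quotientEquivOfIsCompl P hcompl).finrank_eq.trans hP, hneg⟩

theorem one_tmul_add_I_tmul_mem_Vplus_iff {s : LinearMap.BilinForm ℝ V} {a b : V} :
    (1 : ℂ) ⊗ₜ[ℝ] a + Complex.I ⊗ₜ[ℝ] b ∈ Vplus s ↔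
      s a b = 0 ∧ s b a = 0 ∧ s a a = s b b ∧ 0 < s a a := by
  have hconj : conjC V ((1 : ℂ) ⊗ₜ[ℝ] a + Complex.I ⊗ₜ[ℝ] b) =
      (1 : ℂ) ⊗ₜ[ℝ] a + (-Complex.I) ⊗ₜ[ℝ] b := by
    simp [conjC]
  have hquad : s.baseChange ℂ ((1 : ℂ) ⊗ₜ[ℝ] a + Complex.I ⊗ₜ[ℝ] b)
      ((1 : ℂ) ⊗ₜ[ℝ] a + Complex.I ⊗ₜ[ℝ] b) = ⟨s a a - s b b, s a b + s b a⟩ := by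
    simp [Complex.ext_iff, sub_eq_add_neg]
  have hherm : hermOrth s ((1 : ℂ) ⊗ₜ[ℝ] a + Complex.I ⊗ₜ[ℝ] b)
      ((1 : ℂ) ⊗ₜ[ℝ] a + Complex.I ⊗ₜ[ℝ] b) = ⟨s a a + s b b, s b a - s a b⟩ := by
    rw [hermOrth, hconj]
    simp [Complex.ext_iff, neg_add_eq_sub]
  simp only [Vplus, Set.mem_ofPred_eq, hquad, hherm, Complex.ext_iff, Complex.zero_re,
    Complex.zero_im, Complex.ofReal_re, Complex.ofReal_im]
  constructor
  · rintro ⟨⟨hdiff, hadd⟩, r, hr, hsum, hsub⟩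
    exact ⟨by linarith, by linarith, by linarith, by linarith⟩
  · rintro ⟨hab, hba, hdiag, hpos⟩
    exact ⟨⟨by linarith, by linarith⟩, s a a + s b b, by linarith, rfl, by linarith⟩

theorem exists_posDef_plane_of_mem_Vplus {s : LinearMap.BilinForm ℝ V} {v : ℂ ⊗[ℝ] V}
    (hv : v ∈ Vplus s) :
    ∃ W : Submodule ℝ V, finrank ℝ W = 2 ∧ (∀ w ∈ W, w ≠ 0 → 0 < s w w) ∧
      ∀ x, s.baseChange ℂ v ((1 : ℂ) ⊗ₜ[ℝ] x) = 0 → x ∈ s.orthogonal W := by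
  obtain ⟨a, b, rfl⟩ := exists_eq_one_tmul_add_I_tmul v
  obtain ⟨hab, hba, haa, hpos⟩ := one_tmul_add_I_tmul_mem_Vplus_iff.1 hv
  have hortho : s.iIsOrtho ![a, b] := by
    rw [LinearMap.BilinForm.iIsOrtho_def]
    simp [Fin.forall_fin_two, hab, hba]
  have hdiag : ∀ i, 0 < s (![a, b] i) (![a, b] i) := by
    simp [Fin.forall_fin_two, hpos, ← haa]
  refine ⟨Submodule.span ℝ (Set.range ![a, b]), ?_, posDef_span_of_iIsOrtho hortho hdiag, ?_⟩
  · exact finrank_span_eq_card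
      (LinearMap.BilinForm.linearIndependent_of_iIsOrtho hortho fun i ↦ (hdiag i).ne')
  · intro x hx
    have hx' : s a x = 0 ∧ s b x = 0 := by
      simpa [Complex.ext_iff] using hx
    have hle : Submodule.span ℝ (Set.range ![a, b]) ≤ LinearMap.ker (s.flip x) := by
      rw [Submodule.span_le, Set.range_subset_iff]
      simpa [Fin.forall_fin_two] using hx'
    exact fun w hw ↦ hle hw

theorem Vplus_disjoint_from_Iperp_general {s : LinearMap.BilinForm ℝ V} (hsymm : LinearMap.IsSymm s)
    {N : Submodule ℝ V} (hcodim : finrank ℝ (V ⧸ N) = 2) (hneg : ∀ w ∈ N, w ≠ 0 → s w w < 0)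
    {I : Submodule ℝ V} (hI : ∃ x ∈ I, x ≠ 0 ∧ 0 ≤ s x x) {v : ℂ ⊗[ℝ] V} (hv : v ∈ Vplus s) :
    (∃ x ∈ I, s.baseChange ℂ ((1 : ℂ) ⊗ₜ[ℝ] x) v ≠ 0) ∧ v ∉ (s.orthogonal I).baseChange ℂ := by
  obtain ⟨x, hxI, hx0, hxx⟩ := hI
  obtain ⟨W, hW, hpos, hWx⟩ := exists_posDef_plane_of_mem_Vplus hv
  have hsymmC : LinearMap.IsSymm (s.baseChange ℂ) :=
    LinearMap.BilinForm.IsSymm.baseChange ℂ hsymm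
  have : FiniteDimensional ℝ (V ⧸ N) := FiniteDimensional.of_finrank_pos (by lia)
  have hne : s.baseChange ℂ ((1 : ℂ) ⊗ₜ[ℝ] x) v ≠ 0 := fun h ↦
    hxx.not_gt <| apply_self_neg_of_mem_orthogonal_posDef hsymm.isRefl (hcodim.trans hW.symm).le
      hpos hneg (hWx x (hsymmC.isRefl _ _ h)) hx0
  exact ⟨⟨x, hxI, hne⟩, fun hmem ↦
    hne (baseChange_orthogonal_le s I hmem _ (Submodule.tmul_mem_baseChange_of_mem 1 hxI))⟩

/-- let `I ⊂ V` be a 1-dimensional subspace with `s|I×I = 0`.  Then for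
every `v ∈ V⁺` there exists `x ∈ I` with `s_ℂ(x⊗1, v) ≠ 0`; equivalently, `V⁺` is
disjoint from the complexification `I^⊥_ℂ` of `I^⊥`. -/
theorem Vplus_disjoint_from_Iperp
    [FiniteDimensional ℝ V] (n : ℕ) (hn : 1 ≤ n)
    (hdim : Module.finrank ℝ V = n + 2)
    (s : LinearMap.BilinForm ℝ V) (hsymm : LinearMap.IsSymm s)
    (hnd : LinearMap.BilinForm.Nondegenerate s)
    (hsig : RealSig s ⊤ 2 n)
    (I : Submodule ℝ V) (hIdim : Module.finrank ℝ I = 1)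
    (hIiso : ∀ x ∈ I, ∀ y ∈ I, s x y = 0)
    (Iperp : Submodule ℝ V) (hIperp : ∀ w : V, w ∈ Iperp ↔ ∀ x ∈ I, s w x = 0) :
    ∀ v ∈ Vplus s,
      (∃ x ∈ I, (LinearMap.BilinForm.baseChange ℂ s) ((1 : ℂ) ⊗ₜ[ℝ] x) v ≠ 0) ∧
      v ∉ Iperp.baseChange ℂ := by
  obtain ⟨N, hcodim, hneg⟩ := hsig.exists_negDef_finrank_quotient_eq
  obtain ⟨x, hxI, hx0⟩ := I.exists_mem_ne_zero_of_ne_bot (Submodule.one_le_finrank_iff.1 hIdim.ge)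
  obtain rfl : Iperp = s.orthogonal I := by
    ext w
    simp only [hIperp, LinearMap.BilinForm.mem_orthogonal_iff, hsymm.eq_iff]
  exact fun v ↦ Vplus_disjoint_from_Iperp_general hsymm hcodim hneg
    ⟨x, hxI, hx0, (hIiso x hxI x hxI).ge⟩

end
end
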